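/- (L² estimate on extended valleys) Fix 0 < η' < η and let Ṽ_i be the connected component of {ξ ∈ W_i : Φ(ξ) < H−η'} containing V_i. Let φ^ε be the normalized minimizer of I as above, with λ_{ε,i} = |V_i|^{-1}∫_{V_i} φ^ε dξ and λ_ε = λ_{ε,1} = −λ_{ε,2} ≥ 0. Then for every 1 ≤ i ≤ K, ‖φ^ε − λ_{ε,i}‖_{L²(Ṽ_i)} = o_ε(1) · λ_ε^{1/2} as ε → 0. -/

import Mathlib

open MeasureTheory Real Filter Topology Set

noncomputable section

/-- Euclidean space `ℝ^d`. -/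
abbrev Euc (d : ℕ) := EuclideanSpace ℝ (Fin d)

/-- The Hessian matrix of `Φ` at `ξ`. -/
def hessian {d : ℕ} (Φ : Euc d → ℝ) (ξ : Euc d) : Matrix (Fin d) (Fin d) ℝ :=
  fun i j => iteratedFDeriv ℝ 2 Φ ξ ![EuclideanSpace.single i 1, EuclideanSpace.single j 1]

/-- The divergence of a vector field on `ℝ^d`. -/
def diverg {d : ℕ} (F : Euc d → Euc d) (ξ : Euc d) : ℝ :=
  ∑ j, fderiv ℝ (fun ζ => F ζ j) ξ (EuclideanSpace.single j 1)

/-- The Laplacian of a function on `ℝ^d`. -/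
def lapl {d : ℕ} (f : Euc d → ℝ) (x : Euc d) : ℝ :=
  ∑ j, iteratedFDeriv ℝ 2 f x ![EuclideanSpace.single j 1, EuclideanSpace.single j 1]

/-- The time scale `τ_ε = ε⁻¹ e^{-(H-h)/ε}`. -/
def tau (H h ε : ℝ) : ℝ := ε⁻¹ * Real.exp (-(H - h) / ε)

/-- The partition function `Z_ε = ∫ e^{-Φ/ε}`. -/
def Zpart {d : ℕ} (Φ : Euc d → ℝ) (ε : ℝ) : ℝ := ∫ ξ : Euc d, Real.exp (-Φ ξ / ε)

/-- The Gibbs density `σ^ε = Z_ε⁻¹ e^{-Φ/ε}`. -/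
def sigma {d : ℕ} (Φ : Euc d → ℝ) (ε : ℝ) (ξ : Euc d) : ℝ :=
  (Zpart Φ ε)⁻¹ * Real.exp (-Φ ξ / ε)

/-!
The energy functional is stationary at its minimizer `φ` along `t ↦ t • φ`, so the weighted
Dirichlet energy of `φ` equals the load `λ_{ε,1} - λ_{ε,2} = 2 λ_ε`. The sets `V_i` and `Ṽ_i` lie
in a compact subset of the open connected valley `W_i`. Chaining Poincaré inequalities along
overlapping balls bounds the `L²(Ṽ_i)` distance of `φ` to its mean over `V_i` by the unweighted
energy of `φ` on a slightly larger compact subset `Q` of `W_i`, with a constant that does not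
depend on `ε`. On `Q` one has `Φ ≤ H - δ`, hence `σ^ε / τ_ε ≥ 1 / (ε⁻¹ e^{-δ/ε} e^{h/ε} Z_ε)`.
Since `e^{h/ε} Z_ε` is nondecreasing in `ε`, the factor in the denominator tends to zero.
-/

open scoped ENNReal

/-! ### Interior Poincaré inequality -/

section MeanSquare

variable {α F : Type*} [MeasurableSpace α] [NormedAddCommGroup F]

lemma sq_lintegral_le_measure_univ_mul_lintegral_sq (μ : Measure α) {u : α → ℝ≥0∞}
    (hu : AEMeasurable u μ) : (∫⁻ a, u a ∂μ) ^ 2 ≤ μ univ * ∫⁻ a, u a ^ 2 ∂μ := by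
  have hölder : ∫⁻ a, u a ∂μ ≤ μ univ ^ (1 / 2 : ℝ) * (∫⁻ a, u a ^ 2 ∂μ) ^ (1 / 2 : ℝ) := by
    simpa using ENNReal.lintegral_mul_le_Lp_mul_Lq μ Real.HolderConjugate.two_two
      (f := fun _ => 1) aemeasurable_const hu
  calc (∫⁻ a, u a ∂μ) ^ 2
      ≤ (μ univ ^ (1 / 2 : ℝ) * (∫⁻ a, u a ^ 2 ∂μ) ^ (1 / 2 : ℝ)) ^ 2 := by gcongr
    _ = μ univ * ∫⁻ a, u a ^ 2 ∂μ := by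
      rw [mul_pow, ← ENNReal.rpow_natCast, ← ENNReal.rpow_natCast, ← ENNReal.rpow_mul,
        ← ENNReal.rpow_mul]
      norm_num

lemma enorm_sub_integral_sq_le [NormedSpace ℝ F] [CompleteSpace F] {P : Measure α}
    [IsProbabilityMeasure P] {f : α → F} (hf : Integrable f P) (c : F) :
    ‖c - ∫ y, f y ∂P‖ₑ ^ 2 ≤ ∫⁻ y, ‖c - f y‖ₑ ^ 2 ∂P := by
  have hsub : c - ∫ y, f y ∂P = ∫ y, (c - f y) ∂P := by
    rw [integral_sub (integrable_const c) hf]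
    simp
  calc ‖c - ∫ y, f y ∂P‖ₑ ^ 2
      ≤ (∫⁻ y, ‖c - f y‖ₑ ∂P) ^ 2 := by
        rw [hsub]
        gcongr
        exact enorm_integral_le_lintegral_enorm _
    _ ≤ ∫⁻ y, ‖c - f y‖ₑ ^ 2 ∂P := by
        simpa using sq_lintegral_le_measure_univ_mul_lintegral_sq P
          ((integrable_const c).sub hf).aestronglyMeasurable.enorm

lemma enorm_sub_average_sq_le [NormedSpace ℝ F] [CompleteSpace F] {μ : Measure α}
    [IsFiniteMeasure μ] [NeZero μ] {f : α → F} (hf : Integrable f μ) (c : F) :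
    ‖c - ⨍ y, f y ∂μ‖ₑ ^ 2 ≤ ⨍⁻ y, ‖c - f y‖ₑ ^ 2 ∂μ :=
  enorm_sub_integral_sq_le hf.to_average c

lemma enorm_sub_sq_le_two_mul_add (a b c : F) :
    ‖a - c‖ₑ ^ 2 ≤ 2 * (‖a - b‖ₑ ^ 2 + ‖b - c‖ₑ ^ 2) := by
  calc ‖a - c‖ₑ ^ 2
      ≤ (‖a - b‖ₑ + ‖b - c‖ₑ) ^ 2 := by
        gcongr
        simpa using enorm_add_le (a - b) (b - c)
    _ ≤ 2 * (‖a - b‖ₑ ^ 2 + ‖b - c‖ₑ ^ 2) := by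
        have h := ENNReal.rpow_add_le_mul_rpow_add_rpow ‖a - b‖ₑ ‖b - c‖ₑ one_le_two
        norm_num at h
        exact h

end MeanSquare

/-- The cross oscillation `∫_A ∫_B ‖f x - f y‖² dy dx`, as an extended nonnegative number. -/
def crossOscillation {E F : Type*} [MeasurableSpace E] [NormedAddCommGroup F] (μ : Measure E)
    (f : E → F) (A B : Set E) : ℝ≥0∞ :=
  ∫⁻ x in A, ∫⁻ y in B, ‖f x - f y‖ₑ ^ 2 ∂μ ∂μ

/-- The Dirichlet energy `∫_Q ‖Df‖²` on a region, as an extended nonnegative number; `‖Df‖` is the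
operator norm of the Fréchet derivative. -/
def dirichletEnergy {E F : Type*} [NormedAddCommGroup E] [NormedSpace ℝ E] [MeasurableSpace E]
    [NormedAddCommGroup F] [NormedSpace ℝ F] (μ : Measure E) (f : E → F) (Q : Set E) : ℝ≥0∞ :=
  ∫⁻ z in Q, ‖fderiv ℝ f z‖ₑ ^ 2 ∂μ

section CrossOscillation

variable {E F : Type*} [MeasurableSpace E] [NormedAddCommGroup F] {μ : Measure E} {f : E → F}
  {A A' B B' D : Set E}

lemma crossOscillation_mono (hA : A' ⊆ A) (hB : B' ⊆ B) :
    crossOscillation μ f A' B' ≤ crossOscillation μ f A B :=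
  (lintegral_mono fun _ => lintegral_mono_set hB).trans (lintegral_mono_set hA)

lemma crossOscillation_union_le :
    crossOscillation μ f (A ∪ A') B ≤ crossOscillation μ f A B + crossOscillation μ f A' B :=
  lintegral_union_le _ _ _

variable [TopologicalSpace E] [SecondCountableTopology E] [OpensMeasurableSpace E]

lemma measurable_enorm_sub_sq (hf : Continuous f) :
    Measurable fun p : E × E => ‖f p.1 - f p.2‖ₑ ^ 2 := by
  have : Continuous fun p : E × E => ‖f p.1 - f p.2‖ₑ := by fun_prop
  exact this.measurable.pow_const 2

variable [SFinite μ]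

lemma crossOscillation_comm (hf : Continuous f) :
    crossOscillation μ f A B = crossOscillation μ f B A := by
  unfold crossOscillation
  rw [lintegral_lintegral_swap (measurable_enorm_sub_sq hf).aemeasurable]
  simp_rw [enorm_sub_rev]

lemma measure_mul_crossOscillation_le (hf : Continuous f) :
    μ B * crossOscillation μ f A D ≤
      2 * (μ D * crossOscillation μ f A B + μ A * crossOscillation μ f B D) := by
  have hmeas : Measurable fun p : E × E => ‖f p.1 - f p.2‖ₑ ^ 2 := measurable_enorm_sub_sq hf
  have hmeas₁ : ∀ x, Measurable fun y => ‖f x - f y‖ₑ ^ 2 := fun x =>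
    hmeas.comp measurable_prodMk_left
  have hmeas₂ : Measurable fun z => ∫⁻ y in D, ‖f z - f y‖ₑ ^ 2 ∂μ := hmeas.lintegral_prod_right'
  calc μ B * crossOscillation μ f A D
      = ∫⁻ x in A, ∫⁻ _ in B, ∫⁻ y in D, ‖f x - f y‖ₑ ^ 2 ∂μ ∂μ ∂μ := by
        simp_rw [setLIntegral_const, mul_comm _ (μ B)]
        exact (lintegral_const_mul _ hmeas₂).symm
    _ ≤ ∫⁻ x in A, ∫⁻ z in B, ∫⁻ y in D,
          2 * (‖f x - f z‖ₑ ^ 2 + ‖f z - f y‖ₑ ^ 2) ∂μ ∂μ ∂μ := by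
        gcongr with x z y
        exact enorm_sub_sq_le_two_mul_add _ _ _
    _ = ∫⁻ x in A, 2 * (μ D * (∫⁻ z in B, ‖f x - f z‖ₑ ^ 2 ∂μ) +
          crossOscillation μ f B D) ∂μ := by
        refine lintegral_congr fun x => ?_
        have hinner : ∀ z, ∫⁻ y in D, 2 * (‖f x - f z‖ₑ ^ 2 + ‖f z - f y‖ₑ ^ 2) ∂μ =
            2 * (μ D * ‖f x - f z‖ₑ ^ 2 + ∫⁻ y in D, ‖f z - f y‖ₑ ^ 2 ∂μ) := fun z => by
          rw [lintegral_const_mul' _ _ ENNReal.ofNat_ne_top,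
            lintegral_add_left measurable_const, setLIntegral_const, mul_comm (μ D)]
        simp_rw [hinner]
        rw [lintegral_const_mul' _ _ ENNReal.ofNat_ne_top,
          lintegral_add_right _ hmeas₂, lintegral_const_mul _ (hmeas₁ x), crossOscillation]
    _ = 2 * (μ D * crossOscillation μ f A B + μ A * crossOscillation μ f B D) := by
        have hmeas₃ : Measurable fun x => ∫⁻ z in B, ‖f x - f z‖ₑ ^ 2 ∂μ :=
          hmeas.lintegral_prod_right'
        rw [lintegral_const_mul' _ _ ENNReal.ofNat_ne_top,
          lintegral_add_right _ measurable_const, lintegral_const_mul _ hmeas₃,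
          setLIntegral_const, mul_comm _ (μ A), ← crossOscillation]

end CrossOscillation

section Ball

variable {E F : Type*} [NormedAddCommGroup E] [NormedSpace ℝ E] [NormedAddCommGroup F]
  [NormedSpace ℝ F] [CompleteSpace F] {f : E → F}

lemma enorm_sub_le_lintegral_enorm_fderiv_segment (hf : Differentiable ℝ f) (x y : E) :
    ‖f x - f y‖ₑ ≤ ∫⁻ t in Ioc (0 : ℝ) 1, ‖fderiv ℝ f ((1 - t) • x + t • y) (y - x)‖ₑ := by
  set γ : ℝ → E := fun t => (1 - t) • x + t • y with hγ
  set g : ℝ → F := fun t => fderiv ℝ f (γ t) (y - x)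
  have hderiv : ∀ t, HasDerivAt (f ∘ γ) (g t) t := fun t => by
    have hγ' : HasDerivAt γ ((0 - 1 : ℝ) • x + (1 : ℝ) • y) t :=
      (((hasDerivAt_const t (1 : ℝ)).sub (hasDerivAt_id t)).smul_const x).add
        ((hasDerivAt_id t).smul_const y)
    rw [show (0 - 1 : ℝ) • x + (1 : ℝ) • y = y - x by module] at hγ'
    exact (hf (γ t)).hasFDerivAt.comp_hasDerivAt t hγ'
  have hg : StronglyMeasurable g := by
    rw [← funext fun t => (hderiv t).deriv]
    exact stronglyMeasurable_deriv _
  rcases eq_or_ne (∫⁻ t in Ioc (0 : ℝ) 1, ‖g t‖ₑ) ⊤ with htop | htop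
  · exact htop ▸ le_top
  have hint : IntegrableOn g (Ioc 0 1) := ⟨hg.aestronglyMeasurable, lt_top_iff_ne_top.2 htop⟩
  have hftc : ∫ t in Ioc (0 : ℝ) 1, g t = f y - f x := by
    rw [← intervalIntegral.integral_of_le zero_le_one,
      intervalIntegral.integral_eq_sub_of_hasDerivAt (fun t _ => hderiv t)
        ((intervalIntegrable_iff_integrableOn_Ioc_of_le zero_le_one).2 hint)]
    simp [hγ]
  rw [enorm_sub_rev, ← hftc]
  exact enorm_integral_le_lintegral_enorm _

variable [MeasurableSpace E] [BorelSpace E]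

lemma enorm_sub_sq_le_lintegral_fderiv_segment (hf : Differentiable ℝ f) (x y : E) :
    ‖f x - f y‖ₑ ^ 2 ≤
      ‖y - x‖ₑ ^ 2 * ∫⁻ t in Ioc (0 : ℝ) 1, ‖fderiv ℝ f ((1 - t) • x + t • y)‖ₑ ^ 2 := by
  have hmeas : Measurable fun t : ℝ => ‖fderiv ℝ f ((1 - t) • x + t • y)‖ₑ :=
    (measurable_fderiv ℝ f).enorm.comp
      (by fun_prop : Continuous fun t : ℝ => (1 - t) • x + t • y).measurable
  have hlin : ‖f x - f y‖ₑ ≤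
      ‖y - x‖ₑ * ∫⁻ t in Ioc (0 : ℝ) 1, ‖fderiv ℝ f ((1 - t) • x + t • y)‖ₑ := by
    rw [← lintegral_const_mul _ hmeas]
    refine (enorm_sub_le_lintegral_enorm_fderiv_segment hf x y).trans
      (lintegral_mono fun t => ?_)
    simpa only [mul_comm] using (fderiv ℝ f ((1 - t) • x + t • y)).le_opENorm (y - x)
  calc ‖f x - f y‖ₑ ^ 2
      ≤ ‖y - x‖ₑ ^ 2 *
          (∫⁻ t in Ioc (0 : ℝ) 1, ‖fderiv ℝ f ((1 - t) • x + t • y)‖ₑ) ^ 2 := by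
        rw [← mul_pow]
        gcongr
    _ ≤ ‖y - x‖ₑ ^ 2 * ∫⁻ t in Ioc (0 : ℝ) 1, ‖fderiv ℝ f ((1 - t) • x + t • y)‖ₑ ^ 2 := by
        gcongr
        simpa using sq_lintegral_le_measure_univ_mul_lintegral_sq
          (volume.restrict (Ioc (0 : ℝ) 1)) hmeas.aemeasurable

variable [FiniteDimensional ℝ E] {μ : Measure E} [μ.IsAddHaarMeasure]

lemma lintegral_comp_add_smul_le {G : E → ℝ≥0∞} (hG : Measurable G) (a : E) {t : ℝ}
    (ht : 1 / 2 ≤ t) :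
    ∫⁻ y, G (a + t • y) ∂μ ≤ 2 ^ Module.finrank ℝ E * ∫⁻ z, G z ∂μ := by
  have ht0 : 0 < t := by linarith
  have hscale : ENNReal.ofReal |(t ^ Module.finrank ℝ E)⁻¹| ≤ 2 ^ Module.finrank ℝ E := by
    rw [← ENNReal.ofReal_ofNat, ← ENNReal.ofReal_pow (by norm_num), abs_of_nonneg (by positivity),
      ← inv_pow]
    gcongr
    rw [inv_le_comm₀ ht0 (by norm_num)]
    linarith
  calc ∫⁻ y, G (a + t • y) ∂μ
      = ∫⁻ z, G (a + z) ∂(μ.map fun y => t • y) :=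
        (lintegral_map (hG.comp (by fun_prop)) (by fun_prop)).symm
    _ = ENNReal.ofReal |(t ^ Module.finrank ℝ E)⁻¹| * ∫⁻ z, G z ∂μ := by
        rw [Measure.map_addHaar_smul _ ht0.ne', lintegral_smul_measure,
          lintegral_add_left_eq_self, smul_eq_mul]
    _ ≤ 2 ^ Module.finrank ℝ E * ∫⁻ z, G z ∂μ := by gcongr

-- Whichever of `t` and `1 - t` is at least `1 / 2` carries a change of variables of bounded cost.
lemma setLIntegral_setLIntegral_convexCombination_le {G : E → ℝ≥0∞} (hG : Measurable G)
    (B : Set E) (t : ℝ) :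
    ∫⁻ x in B, ∫⁻ y in B, G ((1 - t) • x + t • y) ∂μ ∂μ ≤
      2 ^ Module.finrank ℝ E * μ B * ∫⁻ z, G z ∂μ := by
  have hone : ∀ s : ℝ, 1 / 2 ≤ s → ∀ a : E → E,
      ∫⁻ x in B, ∫⁻ y in B, G (a x + s • y) ∂μ ∂μ ≤
        2 ^ Module.finrank ℝ E * μ B * ∫⁻ z, G z ∂μ := fun s hs a =>
    calc ∫⁻ x in B, ∫⁻ y in B, G (a x + s • y) ∂μ ∂μ
        ≤ ∫⁻ _ in B, 2 ^ Module.finrank ℝ E * ∫⁻ z, G z ∂μ ∂μ :=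
          lintegral_mono fun x =>
            (setLIntegral_le_lintegral _ _).trans (lintegral_comp_add_smul_le (μ := μ) hG (a x) hs)
      _ = 2 ^ Module.finrank ℝ E * μ B * ∫⁻ z, G z ∂μ := by
          rw [setLIntegral_const]
          ring
  rcases le_total (1 / 2) t with ht | ht
  · exact hone t ht fun x => (1 - t) • x
  · have hmeas : Measurable (Function.uncurry fun x y : E => G ((1 - t) • x + t • y)) :=
      hG.comp (by fun_prop)
    rw [lintegral_lintegral_swap hmeas.aemeasurable]
    simp_rw [add_comm _ (t • _)]
    exact hone (1 - t) (by linarith) fun y => t • y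

lemma setLIntegral_setLIntegral_lintegral_segment_le {G : E → ℝ≥0∞} (hG : Measurable G)
    (B : Set E) :
    ∫⁻ x in B, ∫⁻ y in B, (∫⁻ t in Ioc (0 : ℝ) 1, G ((1 - t) • x + t • y)) ∂μ ∂μ ≤
      2 ^ Module.finrank ℝ E * μ B * ∫⁻ z, G z ∂μ := by
  have hswap : ∀ x, ∫⁻ y in B, (∫⁻ t in Ioc (0 : ℝ) 1, G ((1 - t) • x + t • y)) ∂μ =
      ∫⁻ t in Ioc (0 : ℝ) 1, ∫⁻ y in B, G ((1 - t) • x + t • y) ∂μ := fun x =>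
    lintegral_lintegral_swap (hG.comp (by fun_prop)).aemeasurable
  have hmeas : Measurable fun q : (E × ℝ) × E => G ((1 - q.1.2) • q.1.1 + q.1.2 • q.2) :=
    hG.comp (by fun_prop)
  calc ∫⁻ x in B, ∫⁻ y in B, (∫⁻ t in Ioc (0 : ℝ) 1, G ((1 - t) • x + t • y)) ∂μ ∂μ
      = ∫⁻ t in Ioc (0 : ℝ) 1, ∫⁻ x in B, ∫⁻ y in B, G ((1 - t) • x + t • y) ∂μ ∂μ := by
        simp_rw [hswap]
        exact lintegral_lintegral_swap hmeas.lintegral_prod_right'.aemeasurable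
    _ ≤ ∫⁻ _ in Ioc (0 : ℝ) 1, 2 ^ Module.finrank ℝ E * μ B * ∫⁻ z, G z ∂μ :=
        lintegral_mono fun t => setLIntegral_setLIntegral_convexCombination_le hG B t
    _ = 2 ^ Module.finrank ℝ E * μ B * ∫⁻ z, G z ∂μ := by simp

lemma crossOscillation_ball_le (hf : Differentiable ℝ f) (c : E) (ρ : ℝ) :
    crossOscillation μ f (Metric.ball c ρ) (Metric.ball c ρ) ≤
      ENNReal.ofReal (2 * ρ) ^ 2 * (2 ^ Module.finrank ℝ E * μ (Metric.ball c ρ)) *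
        dirichletEnergy μ f (Metric.ball c ρ) := by
  set B := Metric.ball c ρ
  have hB : MeasurableSet B := Metric.isOpen_ball.measurableSet
  set G : E → ℝ≥0∞ := B.indicator fun z => ‖fderiv ℝ f z‖ₑ ^ 2 with hGdef
  have hG : Measurable G := ((measurable_fderiv ℝ f).enorm.pow_const 2).indicator hB
  have hpt : ∀ x ∈ B, ∀ y ∈ B, ‖f x - f y‖ₑ ^ 2 ≤
      ENNReal.ofReal (2 * ρ) ^ 2 * ∫⁻ t in Ioc (0 : ℝ) 1, G ((1 - t) • x + t • y) := by
    intro x hx y hy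
    refine (enorm_sub_sq_le_lintegral_fderiv_segment hf x y).trans ?_
    gcongr ?_ ^ 2 * ?_
    · rw [← ofReal_norm, ← dist_eq_norm]
      gcongr
      linarith [dist_triangle_right y x c, Metric.mem_ball.1 hx, Metric.mem_ball.1 hy]
    · refine setLIntegral_mono' measurableSet_Ioc fun t ht => ?_
      have hmem : (1 - t) • x + t • y ∈ B :=
        convex_ball c ρ hx hy (by linarith [ht.2]) ht.1.le (by ring)
      rw [hGdef, indicator_of_mem hmem]
  calc crossOscillation μ f B B
      ≤ ∫⁻ x in B, ∫⁻ y in B, (ENNReal.ofReal (2 * ρ) ^ 2 *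
          ∫⁻ t in Ioc (0 : ℝ) 1, G ((1 - t) • x + t • y)) ∂μ ∂μ :=
        setLIntegral_mono' hB fun x hx => setLIntegral_mono' hB (hpt x hx)
    _ = ENNReal.ofReal (2 * ρ) ^ 2 *
          ∫⁻ x in B, ∫⁻ y in B, (∫⁻ t in Ioc (0 : ℝ) 1, G ((1 - t) • x + t • y)) ∂μ ∂μ := by
        have hfin : ENNReal.ofReal (2 * ρ) ^ 2 ≠ ⊤ := by finiteness
        simp_rw [lintegral_const_mul' _ _ hfin]
    _ ≤ ENNReal.ofReal (2 * ρ) ^ 2 *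
          (2 ^ Module.finrank ℝ E * μ B * ∫⁻ z, G z ∂μ) := by
        gcongr
        exact setLIntegral_setLIntegral_lintegral_segment_le hG B
    _ = ENNReal.ofReal (2 * ρ) ^ 2 * (2 ^ Module.finrank ℝ E * μ B) * dirichletEnergy μ f B := by
        rw [hGdef, lintegral_indicator hB, dirichletEnergy, ← mul_assoc]

end Ball

section CrossPoincare

variable {E F : Type*} [NormedAddCommGroup E] [NormedSpace ℝ E] [MeasurableSpace E]
  [NormedAddCommGroup F] [NormedSpace ℝ F] {μ : Measure E} {f : E → F} {W A A' B B' D Q Q' : Set E}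

lemma dirichletEnergy_mono (hQ : Q ⊆ Q') : dirichletEnergy μ f Q ≤ dirichletEnergy μ f Q' :=
  lintegral_mono_set hQ

variable (μ F) in
/-- An interior Poincaré inequality in two-set form: the cross oscillation over `A × B` of every
differentiable `F`-valued function is at most a constant times its Dirichlet energy on a compact
subset of `W`. Unlike the usual one-set form, it can be chained from set to set. -/
def HasCrossPoincare (W A B : Set E) : Prop :=
  ∃ Q ⊆ W, IsCompact Q ∧ ∃ C ≠ ⊤, ∀ f : E → F, Differentiable ℝ f →
    crossOscillation μ f A B ≤ C * dirichletEnergy μ f Q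

namespace HasCrossPoincare

lemma empty_left (W B : Set E) : HasCrossPoincare F μ W ∅ B :=
  ⟨∅, empty_subset _, isCompact_empty, 0, ENNReal.zero_ne_top, by simp [crossOscillation]⟩

lemma mono (h : HasCrossPoincare F μ W A B) (hA : A' ⊆ A) (hB : B' ⊆ B) :
    HasCrossPoincare F μ W A' B' := by
  obtain ⟨Q, hQW, hQ, C, hC, hP⟩ := h
  exact ⟨Q, hQW, hQ, C, hC, fun f hf => (crossOscillation_mono hA hB).trans (hP f hf)⟩

lemma union_left (h : HasCrossPoincare F μ W A B) (h' : HasCrossPoincare F μ W A' B) :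
    HasCrossPoincare F μ W (A ∪ A') B := by
  obtain ⟨Q, hQW, hQ, C, hC, hP⟩ := h
  obtain ⟨Q', hQW', hQ', C', hC', hP'⟩ := h'
  refine ⟨Q ∪ Q', union_subset hQW hQW', hQ.union hQ', C + C', ENNReal.add_ne_top.2 ⟨hC, hC'⟩,
    fun f hf => ?_⟩
  calc crossOscillation μ f (A ∪ A') B
      ≤ C * dirichletEnergy μ f Q + C' * dirichletEnergy μ f Q' :=
        crossOscillation_union_le.trans (add_le_add (hP f hf) (hP' f hf))
    _ ≤ (C + C') * dirichletEnergy μ f (Q ∪ Q') := by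
        rw [add_mul]
        gcongr
        exacts [dirichletEnergy_mono subset_union_left, dirichletEnergy_mono subset_union_right]

variable [SecondCountableTopology E] [OpensMeasurableSpace E] [SFinite μ]

lemma symm (h : HasCrossPoincare F μ W A B) : HasCrossPoincare F μ W B A := by
  obtain ⟨Q, hQW, hQ, C, hC, hP⟩ := h
  exact ⟨Q, hQW, hQ, C, hC, fun f hf =>
    (crossOscillation_comm (μ := μ) hf.continuous).trans_le (hP f hf)⟩

lemma union_right (h : HasCrossPoincare F μ W A B) (h' : HasCrossPoincare F μ W A B') :
    HasCrossPoincare F μ W A (B ∪ B') :=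
  (h.symm.union_left h'.symm).symm

lemma trans (h : HasCrossPoincare F μ W A B) (h' : HasCrossPoincare F μ W B D)
    (hA : μ A ≠ ⊤) (hB₀ : μ B ≠ 0) (hB : μ B ≠ ⊤) (hD : μ D ≠ ⊤) :
    HasCrossPoincare F μ W A D := by
  obtain ⟨Q, hQW, hQ, C, hC, hP⟩ := h
  obtain ⟨Q', hQW', hQ', C', hC', hP'⟩ := h'
  refine ⟨Q ∪ Q', union_subset hQW hQW', hQ.union hQ',
    (μ B)⁻¹ * (2 * (μ D * C + μ A * C')), ?_, fun f hf => ?_⟩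
  · have := ENNReal.inv_ne_top.2 hB₀
    finiteness
  calc crossOscillation μ f A D
      = (μ B)⁻¹ * (μ B * crossOscillation μ f A D) := by
        rw [← mul_assoc, ENNReal.inv_mul_cancel hB₀ hB, one_mul]
    _ ≤ (μ B)⁻¹ * (2 * (μ D * crossOscillation μ f A B + μ A * crossOscillation μ f B D)) := by
        gcongr (μ B)⁻¹ * ?_
        exact measure_mul_crossOscillation_le (μ := μ) hf.continuous
    _ ≤ (μ B)⁻¹ * (2 * (μ D * (C * dirichletEnergy μ f (Q ∪ Q')) +
          μ A * (C' * dirichletEnergy μ f (Q ∪ Q')))) := by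
        gcongr
        · exact (hP f hf).trans (by gcongr; exact dirichletEnergy_mono subset_union_left)
        · exact (hP' f hf).trans (by gcongr; exact dirichletEnergy_mono subset_union_right)
    _ = (μ B)⁻¹ * (2 * (μ D * C + μ A * C')) * dirichletEnergy μ f (Q ∪ Q') := by ring

end HasCrossPoincare

variable [BorelSpace E] [FiniteDimensional ℝ E] [μ.IsAddHaarMeasure] [CompleteSpace F]

lemma hasCrossPoincare_ball {c : E} {ρ : ℝ} (hW : Metric.closedBall c ρ ⊆ W) :
    HasCrossPoincare F μ W (Metric.ball c ρ) (Metric.ball c ρ) := by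
  have := FiniteDimensional.proper_real E
  have hfin : μ (Metric.ball c ρ) ≠ ⊤ := measure_ball_lt_top.ne
  refine ⟨Metric.closedBall c ρ, hW, isCompact_closedBall c ρ, _, ?_, fun f hf =>
    (crossOscillation_ball_le hf c ρ).trans
      (mul_le_mul_right (dirichletEnergy_mono Metric.ball_subset_closedBall) _)⟩
  finiteness

lemma exists_hasCrossPoincare_ball_ball (hWo : IsOpen W) (hWc : IsPreconnected W) {x y : E}
    (hx : x ∈ W) (hy : y ∈ W) :
    ∃ r > 0, HasCrossPoincare F μ W (Metric.ball x r) (Metric.ball y r) := by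
  have := FiniteDimensional.proper_real E
  refine hWc.induction₂
    (fun x y => ∃ r > 0, HasCrossPoincare F μ W (Metric.ball x r) (Metric.ball y r))
    (fun x hx => ?_) ?_ ?_ hx hy
  · obtain ⟨ρ, hρ, hball⟩ := Metric.nhds_basis_closedBall.mem_iff.1 (hWo.mem_nhds hx)
    filter_upwards [mem_nhdsWithin_of_mem_nhds (Metric.ball_mem_nhds x (half_pos hρ))] with y hy
    refine ⟨ρ / 2, half_pos hρ, (hasCrossPoincare_ball hball).mono
      (Metric.ball_subset_ball (by linarith)) (Metric.ball_subset_ball' ?_)⟩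
    linarith [Metric.mem_ball.1 hy]
  · rintro x y z - - - ⟨r, hr, hxy⟩ ⟨s, hs, hyz⟩
    have hrs : 0 < min r s := lt_min hr hs
    have hr' := fun w : E => Metric.ball_subset_ball (x := w) (min_le_left r s)
    have hs' := fun w : E => Metric.ball_subset_ball (x := w) (min_le_right r s)
    exact ⟨min r s, hrs, (hxy.mono (hr' x) (hr' y)).trans (hyz.mono (hs' y) (hs' z))
      measure_ball_lt_top.ne (Metric.measure_ball_pos _ _ hrs).ne' measure_ball_lt_top.ne
      measure_ball_lt_top.ne⟩
  · rintro x y - - ⟨r, hr, h⟩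
    exact ⟨r, hr, h.symm⟩

lemma hasCrossPoincare_of_isCompact (hWo : IsOpen W) (hWc : IsPreconnected W)
    (hA : IsCompact A) (hAW : A ⊆ W) (hB : IsCompact B) (hBW : B ⊆ W) :
    HasCrossPoincare F μ W A B := by
  have hball : ∀ y ∈ W, ∃ r > 0, HasCrossPoincare F μ W A (Metric.ball y r) := by
    intro y hy
    refine hA.induction_on (p := fun s => ∃ r > 0, HasCrossPoincare F μ W s (Metric.ball y r))
      ⟨1, one_pos, .empty_left W _⟩ ?_ ?_ fun x hx => ?_
    · rintro s t hst ⟨r, hr, h⟩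
      exact ⟨r, hr, h.mono hst subset_rfl⟩
    · rintro s t ⟨r, hr, h⟩ ⟨r', hr', h'⟩
      exact ⟨min r r', lt_min hr hr',
        (h.mono subset_rfl (Metric.ball_subset_ball (min_le_left r r'))).union_left
          (h'.mono subset_rfl (Metric.ball_subset_ball (min_le_right r r')))⟩
    · obtain ⟨r, hr, h⟩ := exists_hasCrossPoincare_ball_ball (F := F) (μ := μ) hWo hWc (hAW hx) hy
      exact ⟨_, mem_nhdsWithin_of_mem_nhds (Metric.ball_mem_nhds x hr), r, hr, h⟩
  refine hB.induction_on (p := HasCrossPoincare F μ W A) (HasCrossPoincare.empty_left W A).symm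
    (fun s t hst h => h.mono subset_rfl hst) (fun s t h h' => h.union_right h') fun y hy => ?_
  obtain ⟨r, hr, h⟩ := hball y (hBW hy)
  exact ⟨_, mem_nhdsWithin_of_mem_nhds (Metric.ball_mem_nhds y hr), h⟩

end CrossPoincare

lemma setLIntegral_enorm_sub_setAverage_sq_le {E F : Type*} [MeasurableSpace E]
    [NormedAddCommGroup F] [NormedSpace ℝ F] [CompleteSpace F] {μ : Measure E} {f : E → F}
    {V : Set E} (hV₀ : μ V ≠ 0) (hV : μ V ≠ ⊤) (hf : IntegrableOn f V μ) (U : Set E) :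
    ∫⁻ x in U, ‖f x - ⨍ y in V, f y ∂μ‖ₑ ^ 2 ∂μ ≤ (μ V)⁻¹ * crossOscillation μ f U V := by
  have : IsFiniteMeasure (μ.restrict V) := isFiniteMeasure_restrict.2 hV
  have : NeZero (μ.restrict V) := ⟨Measure.restrict_eq_zero.not.2 hV₀⟩
  rw [crossOscillation, ← lintegral_const_mul' _ _ (ENNReal.inv_ne_top.2 hV₀)]
  gcongr with x
  refine (enorm_sub_average_sq_le hf (f x)).trans_eq ?_
  rw [setLAverage_eq, ENNReal.div_eq_inv_mul]

/-! ### Minimizers of weighted Dirichlet energies -/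

section Variational

variable {E F : Type*} [NormedAddCommGroup E] [NormedSpace ℝ E] [NormedAddCommGroup F]
  [NormedSpace ℝ F]

lemma weight_mul_norm_fderiv_smul_sq (w : E → ℝ) (ψ : E → F) (t : ℝ) (x : E) :
    w x * ‖fderiv ℝ (t • ψ) x‖ ^ 2 = t ^ 2 * (w x * ‖fderiv ℝ ψ x‖ ^ 2) := by
  rw [fderiv_const_smul_field, Pi.smul_apply, norm_smul, mul_pow, norm_eq_abs, sq_abs]
  ring

variable [MeasurableSpace E] {μ : Measure E} {w : E → ℝ} {ℓ : (E → F) → ℝ} {φ ψ : E → F}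

/-- The weighted Dirichlet energy `∫ w ‖Dψ‖²`, with the junk value `0` if this is not integrable. -/
def weightedEnergy (μ : Measure E) (w : E → ℝ) (ψ : E → F) : ℝ :=
  ∫ x, w x * ‖fderiv ℝ ψ x‖ ^ 2 ∂μ

/-- The differentiable functions of finite weighted energy `∫ w ‖Dψ‖²`. -/
structure HasFiniteEnergy (μ : Measure E) (w : E → ℝ) (ψ : E → F) : Prop where
  differentiable : Differentiable ℝ ψ
  integrable : Integrable (fun x => w x * ‖fderiv ℝ ψ x‖ ^ 2) μ

/-- `φ` minimizes `ψ ↦ ½ ∫ w ‖Dψ‖² - ℓ ψ` among the differentiable functions of finite weighted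
energy. The load `ℓ` is an arbitrary functional: averages of non-integrable functions have junk
values, so the loads of interest are homogeneous but not additive. -/
structure IsEnergyMinimizer (μ : Measure E) (w : E → ℝ) (ℓ : (E → F) → ℝ) (φ : E → F) : Prop where
  hasFiniteEnergy : HasFiniteEnergy μ w φ
  le : ∀ ψ, HasFiniteEnergy μ w ψ →
    2⁻¹ * weightedEnergy μ w φ - ℓ φ ≤ 2⁻¹ * weightedEnergy μ w ψ - ℓ ψ

lemma weightedEnergy_smul (t : ℝ) (ψ : E → F) :
    weightedEnergy μ w (t • ψ) = t ^ 2 * weightedEnergy μ w ψ := by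
  simp_rw [weightedEnergy, weight_mul_norm_fderiv_smul_sq, integral_const_mul]

lemma weightedEnergy_nonneg (hw : 0 ≤ w) (ψ : E → F) : 0 ≤ weightedEnergy μ w ψ :=
  integral_nonneg fun x => mul_nonneg (hw x) (sq_nonneg _)

lemma HasFiniteEnergy.smul (h : HasFiniteEnergy μ w ψ) (t : ℝ) :
    HasFiniteEnergy μ w (t • ψ) :=
  ⟨h.differentiable.const_smul t, by
    simpa only [weight_mul_norm_fderiv_smul_sq] using h.integrable.const_mul (t ^ 2)⟩

namespace IsEnergyMinimizer

-- The derivative of the functional along `t ↦ t • φ` vanishes at `t = 1`.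
lemma weightedEnergy_eq (h : IsEnergyMinimizer μ w ℓ φ) (hℓ : ∀ t : ℝ, ℓ (t • φ) = t * ℓ φ) :
    weightedEnergy μ w φ = ℓ φ := by
  set c := weightedEnergy μ w φ
  have hmin : IsLocalMin (fun t : ℝ => 2⁻¹ * (t ^ 2 * c) - t * ℓ φ) 1 :=
    Eventually.of_forall fun t => by
      simpa [c, weightedEnergy_smul, hℓ] using h.le (t • φ) (h.hasFiniteEnergy.smul t)
  have hderiv : HasDerivAt (fun t : ℝ => 2⁻¹ * (t ^ 2 * c) - t * ℓ φ) (c - ℓ φ) 1 := by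
    refine ((((hasDerivAt_pow 2 (1 : ℝ)).mul_const c).const_mul 2⁻¹).fun_sub
      ((hasDerivAt_id' (1 : ℝ)).mul_const (ℓ φ))).congr_deriv ?_
    simp
  exact sub_eq_zero.1 (hmin.hasDerivAt_eq_zero hderiv)

lemma eq_zero_of_weight_zero (h : IsEnergyMinimizer μ 0 ℓ φ) (hψ : Differentiable ℝ ψ)
    (hℓ : ∀ t : ℝ, ℓ (t • ψ) = t * ℓ ψ) : ℓ ψ = 0 := by
  by_contra hne
  have hbound : ∀ t : ℝ, t * ℓ ψ ≤ ℓ φ := fun t => by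
    simpa [weightedEnergy, hℓ] using h.le (t • ψ) ⟨hψ.const_smul t, by simp⟩
  have := hbound ((ℓ φ + 1) / ℓ ψ)
  rw [div_mul_cancel₀ _ hne] at this
  linarith

end IsEnergyMinimizer

lemma dirichletEnergy_le_ofReal_mul_weightedEnergy (hw : 0 ≤ w) (h : HasFiniteEnergy μ w ψ)
    {Q : Set E} (hQ : MeasurableSet Q) {κ : ℝ} (hκ : 0 ≤ κ) (hκw : ∀ x ∈ Q, 1 ≤ κ * w x) :
    dirichletEnergy μ ψ Q ≤ ENNReal.ofReal (κ * weightedEnergy μ w ψ) := by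
  have hnonneg : ∀ x, 0 ≤ κ * (w x * ‖fderiv ℝ ψ x‖ ^ 2) := fun x =>
    mul_nonneg hκ (mul_nonneg (hw x) (sq_nonneg _))
  calc dirichletEnergy μ ψ Q
      ≤ ∫⁻ x in Q, ENNReal.ofReal (κ * (w x * ‖fderiv ℝ ψ x‖ ^ 2)) ∂μ := by
        refine setLIntegral_mono' hQ fun x hx => ?_
        rw [← ofReal_norm, ← ENNReal.ofReal_pow (norm_nonneg _), ← mul_assoc]
        gcongr
        exact le_mul_of_one_le_left (sq_nonneg _) (hκw x hx)
    _ ≤ ∫⁻ x, ENNReal.ofReal (κ * (w x * ‖fderiv ℝ ψ x‖ ^ 2)) ∂μ := setLIntegral_le_lintegral _ _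
    _ = ENNReal.ofReal (κ * weightedEnergy μ w ψ) := by
        rw [← ofReal_integral_eq_lintegral_ofReal (h.integrable.const_mul κ) (.of_forall hnonneg),
          integral_const_mul, weightedEnergy]

end Variational

section AverageGap

/-- The load `⨍_{V₁} ψ - ⨍_{V₂} ψ` of the variational problem. -/
def averageGap {E : Type*} [MeasurableSpace E] (μ : Measure E) (V₁ V₂ : Set E) (ψ : E → ℝ) : ℝ :=
  (⨍ x in V₁, ψ x ∂μ) - ⨍ x in V₂, ψ x ∂μ

lemma averageGap_smul {E : Type*} [MeasurableSpace E] (μ : Measure E) (V₁ V₂ : Set E) (t : ℝ)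
    (ψ : E → ℝ) : averageGap μ V₁ V₂ (t • ψ) = t * averageGap μ V₁ V₂ ψ := by
  simp only [averageGap, average_eq, Pi.smul_apply, smul_eq_mul, integral_const_mul]
  ring

lemma exists_differentiable_averageGap_ne_zero {E : Type*} [NormedAddCommGroup E]
    [NormedSpace ℝ E] [FiniteDimensional ℝ E] [MeasurableSpace E] [BorelSpace E] {μ : Measure E}
    [μ.IsOpenPosMeasure] {V₁ V₂ : Set E} (hV₁ : IsOpen V₁) (hne : V₁.Nonempty)
    (hfin : μ V₁ ≠ ⊤) (hdisj : Disjoint V₁ V₂) :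
    ∃ b : E → ℝ, Differentiable ℝ b ∧ averageGap μ V₁ V₂ b ≠ 0 := by
  obtain ⟨b, hsupp, hb, hrange⟩ := hV₁.exists_contDiff_support_eq (n := 1)
  have hb01 : ∀ x, b x ∈ Icc (0 : ℝ) 1 := fun x => hrange (mem_range_self x)
  have hb₁ : IntegrableOn b V₁ μ := by
    refine .of_bound hfin.lt_top hb.continuous.aestronglyMeasurable 1 (.of_forall fun x => ?_)
    rw [norm_of_nonneg (hb01 x).1]
    exact (hb01 x).2
  have hpos : 0 < ∫ x in V₁, b x ∂μ := by
    rw [setIntegral_pos_iff_support_of_nonneg_ae (.of_forall fun x => (hb01 x).1) hb₁, hsupp,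
      inter_self]
    exact hV₁.measure_pos μ hne
  have hzero : ∀ x ∈ V₂, b x = 0 := fun x hx => by
    rw [← Function.notMem_support, hsupp]
    exact disjoint_right.1 hdisj hx
  refine ⟨b, hb.differentiable one_ne_zero, ?_⟩
  rw [averageGap, setAverage_eq, setAverage_eq, setIntegral_eq_zero_of_forall_eq_zero hzero,
    smul_zero, sub_zero, smul_eq_mul]
  have hvol : 0 < μ.real V₁ := ENNReal.toReal_pos (hV₁.measure_pos μ hne).ne' hfin
  positivity

end AverageGap

/-! ### Valleys and the Gibbs weight -/

section Valley

variable {E : Type*} [TopologicalSpace E] {Φ : E → ℝ} {H a : ℝ} {U V Q : Set E}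

/-- `U` and `V` lie in a common compact part of one valley of the sublevel set `{Φ < H}`; the valley
`W` need not be a full connected component. -/
def LieInCommonValley (Φ : E → ℝ) (H : ℝ) (U V : Set E) : Prop :=
  ∃ W ⊆ {x | Φ x < H}, IsOpen W ∧ IsPreconnected W ∧ ∃ Q ⊆ W, IsCompact Q ∧ U ⊆ Q ∧ V ⊆ Q

lemma exists_pos_forall_le_sub_of_isCompact (hQ : IsCompact Q) (hΦ : ContinuousOn Φ Q)
    (hlt : ∀ x ∈ Q, Φ x < H) : ∃ δ > 0, ∀ x ∈ Q, Φ x ≤ H - δ := by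
  rcases Q.eq_empty_or_nonempty with rfl | hne
  · exact ⟨1, one_pos, by simp⟩
  · obtain ⟨z, hz, hmax⟩ := hQ.exists_isMaxOn hne hΦ
    refine ⟨H - Φ z, sub_pos.2 (hlt z hz), fun x hx => ?_⟩
    rw [sub_sub_cancel]
    exact hmax hx

lemma closure_connectedComponentIn_inter_subset {X : Type*} [TopologicalSpace X] (S : Set X)
    (x : X) : closure (connectedComponentIn S x) ∩ S ⊆ connectedComponentIn S x := by
  by_cases hx : x ∈ S
  · have hsub : connectedComponentIn S x ⊆ closure (connectedComponentIn S x) ∩ S :=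
      subset_inter subset_closure (connectedComponentIn_subset S x)
    exact (isPreconnected_connectedComponentIn.subset_closure hsub
      inter_subset_left).subset_connectedComponentIn (hsub (mem_connectedComponentIn hx))
        inter_subset_right
  · simp [connectedComponentIn_eq_empty hx]

lemma isCompact_setOf_le_of_tendsto_cocompact_atTop (hΦ : Continuous Φ)
    (hcoer : Tendsto Φ (cocompact E) atTop) (a : ℝ) : IsCompact {x | Φ x ≤ a} := by
  obtain ⟨K, hK, hKa⟩ := mem_cocompact.1 (hcoer.eventually_gt_atTop a)
  exact hK.of_isClosed_subset (isClosed_le hΦ continuous_const) fun x hx =>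
    by_contra fun hxK => (show a < Φ x from hKa hxK).not_ge hx

lemma lieInCommonValley_of_subset_connectedComponentIn [LocallyConnectedSpace E]
    (hΦ : Continuous Φ) (hcoer : Tendsto Φ (cocompact E) atTop) (ha : a < H) {x : E}
    (hU : U ⊆ connectedComponentIn {y | Φ y < H} x ∩ {y | Φ y ≤ a})
    (hV : V ⊆ connectedComponentIn {y | Φ y < H} x ∩ {y | Φ y ≤ a}) :
    LieInCommonValley Φ H U V := by
  set W := connectedComponentIn {y | Φ y < H} x
  have hclosure : closure W ∩ {y | Φ y ≤ a} ⊆ W := fun y hy =>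
    closure_connectedComponentIn_inter_subset _ _ ⟨hy.1, lt_of_le_of_lt hy.2 ha⟩
  exact ⟨W, connectedComponentIn_subset _ _,
    (isOpen_lt hΦ continuous_const).connectedComponentIn, isPreconnected_connectedComponentIn,
    closure W ∩ {y | Φ y ≤ a}, hclosure,
    (isCompact_setOf_le_of_tendsto_cocompact_atTop hΦ hcoer a).inter_left isClosed_closure,
    hU.trans (inter_subset_inter_left _ subset_closure),
    hV.trans (inter_subset_inter_left _ subset_closure)⟩

end Valley

lemma LieInCommonValley.measure_right_ne_top {E : Type*} [TopologicalSpace E] [MeasurableSpace E]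
    {μ : Measure E} [IsFiniteMeasureOnCompacts μ] {Φ : E → ℝ} {H : ℝ} {U V : Set E}
    (hUV : LieInCommonValley Φ H U V) : μ V ≠ ⊤ := by
  obtain ⟨_, _, _, _, _, _, hQ, _, hVQ⟩ := hUV
  exact measure_ne_top_of_subset hVQ hQ.measure_ne_top

lemma LieInCommonValley.exists_poincare {E F : Type*} [NormedAddCommGroup E] [NormedSpace ℝ E]
    [FiniteDimensional ℝ E] [MeasurableSpace E] [BorelSpace E] [NormedAddCommGroup F]
    [NormedSpace ℝ F] [CompleteSpace F] {μ : Measure E} [μ.IsAddHaarMeasure] {Φ : E → ℝ} {H : ℝ}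
    {U V : Set E} (hUV : LieInCommonValley Φ H U V) (hΦ : Continuous Φ) (hV : μ V ≠ 0) :
    ∃ Q, IsCompact Q ∧ (∃ δ > 0, ∀ x ∈ Q, Φ x ≤ H - δ) ∧ ∃ C ≠ ⊤, ∀ f : E → F,
      Differentiable ℝ f →
        ∫⁻ x in U, ‖f x - ⨍ y in V, f y ∂μ‖ₑ ^ 2 ∂μ ≤ C * dirichletEnergy μ f Q := by
  have hVtop : μ V ≠ ⊤ := hUV.measure_right_ne_top
  obtain ⟨W, hWH, hWo, hWc, K, hKW, hK, hUK, hVK⟩ := hUV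
  obtain ⟨Q, hQW, hQ, C, hC, hP⟩ : HasCrossPoincare F μ W U V :=
    (hasCrossPoincare_of_isCompact hWo hWc hK hKW hK hKW).mono hUK hVK
  refine ⟨Q, hQ, exists_pos_forall_le_sub_of_isCompact hQ hΦ.continuousOn fun x hx => hWH (hQW hx),
    (μ V)⁻¹ * C, ENNReal.mul_ne_top (ENNReal.inv_ne_top.2 hV) hC, fun f hf => ?_⟩
  have hfV : IntegrableOn f V μ :=
    (hf.continuous.continuousOn.integrableOn_compact hK).mono_set hVK
  calc ∫⁻ x in U, ‖f x - ⨍ y in V, f y ∂μ‖ₑ ^ 2 ∂μ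
      ≤ (μ V)⁻¹ * crossOscillation μ f U V :=
        setLIntegral_enorm_sub_setAverage_sq_le hV hVtop hfV U
    _ ≤ (μ V)⁻¹ * (C * dirichletEnergy μ f Q) := by
        gcongr
        exact hP f hf
    _ = (μ V)⁻¹ * C * dirichletEnergy μ f Q := (mul_assoc _ _ _).symm

lemma integral_sq_le_of_lintegral_enorm_sq_le {α : Type*} [MeasurableSpace α] {μ : Measure α}
    {u : α → ℝ} {M : ℝ} (hM : 0 ≤ M) (hu : ∫⁻ x, ‖u x‖ₑ ^ 2 ∂μ ≤ ENNReal.ofReal M) :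
    ∫ x, u x ^ 2 ∂μ ≤ M := by
  have henorm : ‖∫ x, u x ^ 2 ∂μ‖ₑ ≤ ENNReal.ofReal M :=
    (enorm_integral_le_lintegral_enorm _).trans (by simpa only [enorm_pow] using hu)
  rw [← ofReal_norm, ENNReal.ofReal_le_ofReal_iff hM] at henorm
  exact (le_abs_self _).trans henorm

section Gibbs

variable {d : ℕ} {Φ : Euc d → ℝ} {H h δ ε : ℝ}

/-- The weight `σ^ε / τ_ε` of the Dirichlet energy. -/
def energyWeight (Φ : Euc d → ℝ) (H h ε : ℝ) (ξ : Euc d) : ℝ := sigma Φ ε ξ / tau H h ε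

/-- The factor `ε⁻¹ e^{-δ/ε} · e^{h/ε} Z_ε`, the reciprocal of a lower bound for the weight
`σ^ε / τ_ε` on `{Φ ≤ H - δ}`. -/
def concentrationRate (Φ : Euc d → ℝ) (h δ ε : ℝ) : ℝ :=
  ε⁻¹ * exp (-δ / ε) * (exp (h / ε) * Zpart Φ ε)

lemma Zpart_nonneg (Φ : Euc d → ℝ) (ε : ℝ) : 0 ≤ Zpart Φ ε :=
  integral_nonneg fun _ => (exp_pos _).le

lemma energyWeight_nonneg (hε : 0 ≤ ε) : 0 ≤ energyWeight Φ H h ε := fun ξ => by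
  have := Zpart_nonneg Φ ε
  simp only [energyWeight, sigma, tau, Pi.zero_apply]
  positivity

lemma concentrationRate_nonneg (hε : 0 ≤ ε) : 0 ≤ concentrationRate Φ h δ ε := by
  have := Zpart_nonneg Φ ε
  unfold concentrationRate
  positivity

lemma concentrationRate_mul_energyWeight (hε : ε ≠ 0) (hZ : Zpart Φ ε ≠ 0) (ξ : Euc d) :
    concentrationRate Φ h δ ε * energyWeight Φ H h ε ξ = exp ((H - δ - Φ ξ) / ε) := by
  have hexp : exp ((H - δ - Φ ξ) / ε) =
      exp (-δ / ε) * exp (h / ε) * exp (-Φ ξ / ε) / exp (-(H - h) / ε) := by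
    rw [← exp_add, ← exp_add, ← exp_sub]
    congr 1
    ring
  rw [hexp, concentrationRate, energyWeight, sigma, tau]
  field_simp

lemma exp_mul_Zpart_le {ε₀ : ℝ} (hmin : ∀ ξ, h ≤ Φ ξ) (hε : 0 < ε) (hle : ε ≤ ε₀)
    (hint : Integrable fun ξ => exp (-Φ ξ / ε₀)) :
    exp (h / ε) * Zpart Φ ε ≤ exp (h / ε₀) * Zpart Φ ε₀ := by
  simp only [Zpart, ← integral_const_mul, ← exp_add]
  refine integral_mono_of_nonneg (.of_forall fun ξ => (exp_pos _).le) ?_ (.of_forall fun ξ => ?_)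
  · simpa only [exp_add] using hint.const_mul _
  · have : (Φ ξ - h) / ε₀ ≤ (Φ ξ - h) / ε :=
      div_le_div_of_nonneg_left (sub_nonneg.2 (hmin ξ)) hε hle
    rw [sub_div, sub_div] at this
    refine exp_le_exp.2 ?_
    simp only [neg_div]
    linarith

lemma tendsto_inv_mul_exp_neg_div_nhdsGT_zero (hδ : 0 < δ) :
    Tendsto (fun ε : ℝ => ε⁻¹ * exp (-δ / ε)) (𝓝[>] 0) (𝓝 0) := by
  have hlim := (tendsto_rpow_mul_exp_neg_mul_atTop_nhds_zero 1 δ hδ).comp tendsto_inv_nhdsGT_zero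
  simpa [Function.comp_def, div_eq_mul_inv] using hlim

lemma tendsto_concentrationRate {ε₀ : ℝ} (hmin : ∀ ξ, h ≤ Φ ξ) (hδ : 0 < δ) (hε₀ : 0 < ε₀)
    (hint : Integrable fun ξ => exp (-Φ ξ / ε₀)) :
    Tendsto (concentrationRate Φ h δ) (𝓝[>] 0) (𝓝 0) := by
  have hlim := (tendsto_inv_mul_exp_neg_div_nhdsGT_zero hδ).mul_const (exp (h / ε₀) * Zpart Φ ε₀)
  rw [zero_mul] at hlim
  refine squeeze_zero' ?_ ?_ hlim
  · filter_upwards [self_mem_nhdsWithin] with ε hε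
    exact concentrationRate_nonneg (le_of_lt hε)
  · filter_upwards [Ioc_mem_nhdsGT hε₀] with ε hε
    exact mul_le_mul_of_nonneg_left (exp_mul_Zpart_le hmin hε.1 hε.2 hint)
      (mul_nonneg (inv_nonneg.2 hε.1.le) (exp_pos _).le)

-- If `e^{-Φ/ε}` were not integrable, `Z_ε` and with it the weight would take the junk value `0`,
-- and the functional would be unbounded below.
lemma IsEnergyMinimizer.integrable_exp {V₁ V₂ : Set (Euc d)} {φ : Euc d → ℝ} (hV₁ : IsOpen V₁)
    (hne : V₁.Nonempty) (hfin : volume V₁ ≠ ⊤) (hdisj : Disjoint V₁ V₂)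
    (hφ : IsEnergyMinimizer volume (energyWeight Φ H h ε) (averageGap volume V₁ V₂) φ) :
    Integrable fun ξ => exp (-Φ ξ / ε) := by
  by_contra hint
  have hZ : Zpart Φ ε = 0 := integral_undef hint
  have hw : energyWeight Φ H h ε = 0 := funext fun ξ => by simp [energyWeight, sigma, hZ]
  obtain ⟨b, hb, hgap⟩ := exists_differentiable_averageGap_ne_zero hV₁ hne hfin hdisj
  exact hgap ((hw ▸ hφ).eq_zero_of_weight_zero hb fun t => averageGap_smul _ _ _ t b)

lemma LieInCommonValley.exists_tendsto_zero_sqrt_integral_sub_setAverage_sq_le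
    {U V : Set (Euc d)} (hUV : LieInCommonValley Φ H U V) (hV : volume V ≠ 0) (hΦ : Continuous Φ)
    (hmin : ∀ ξ, h ≤ Φ ξ) (hint : ∀ ε ∈ Ioo (0 : ℝ) 1, Integrable fun ξ => exp (-Φ ξ / ε)) :
    ∃ err : ℝ → ℝ, Tendsto err (𝓝[>] 0) (𝓝 0) ∧ ∀ ε ∈ Ioo (0 : ℝ) 1, ∀ f : Euc d → ℝ,
      HasFiniteEnergy volume (energyWeight Φ H h ε) f →
        √(∫ ξ in U, (f ξ - ⨍ ζ in V, f ζ) ^ 2) ≤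
          err ε * √(weightedEnergy volume (energyWeight Φ H h ε) f) := by
  obtain ⟨Q, hQ, ⟨δ, hδ, hQδ⟩, C, hC, hP⟩ := hUV.exists_poincare (F := ℝ) hΦ hV
  refine ⟨fun ε => √(C.toReal * concentrationRate Φ h δ ε), ?_, fun ε hε f hf => ?_⟩
  · have hrate := tendsto_concentrationRate hmin hδ one_half_pos (hint _ (by norm_num))
    simpa using (hrate.const_mul C.toReal).sqrt
  have hZ : Zpart Φ ε ≠ 0 := (integral_exp_pos (hint ε hε)).ne'
  have hrate : 0 ≤ concentrationRate Φ h δ ε := concentrationRate_nonneg hε.1.le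
  have hweight : ∀ ξ ∈ Q, 1 ≤ concentrationRate Φ h δ ε * energyWeight Φ H h ε ξ := fun ξ hξ => by
    rw [concentrationRate_mul_energyWeight hε.1.ne' hZ, one_le_exp_iff]
    exact div_nonneg (by linarith [hQδ ξ hξ]) hε.1.le
  have henergy : 0 ≤ weightedEnergy volume (energyWeight Φ H h ε) f :=
    weightedEnergy_nonneg (energyWeight_nonneg hε.1.le) f
  have hbound := calc ∫⁻ ξ in U, ‖f ξ - ⨍ ζ in V, f ζ‖ₑ ^ 2
      ≤ C * dirichletEnergy volume f Q := hP f hf.differentiable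
    _ ≤ C * ENNReal.ofReal
          (concentrationRate Φ h δ ε * weightedEnergy volume (energyWeight Φ H h ε) f) := by
        gcongr
        exact dirichletEnergy_le_ofReal_mul_weightedEnergy (energyWeight_nonneg hε.1.le) hf
          hQ.measurableSet hrate hweight
    _ = ENNReal.ofReal (C.toReal * concentrationRate Φ h δ ε *
          weightedEnergy volume (energyWeight Φ H h ε) f) := by
        rw [mul_assoc, ENNReal.ofReal_mul ENNReal.toReal_nonneg, ENNReal.ofReal_toReal hC]
  rw [← sqrt_mul (by positivity)]
  exact sqrt_le_sqrt (integral_sq_le_of_lintegral_enorm_sq_le (by positivity) hbound)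

end Gibbs

section Gradient

variable {E : Type*} [NormedAddCommGroup E] [InnerProductSpace ℝ E] [CompleteSpace E]

lemma norm_gradient_eq_norm_fderiv (f : E → ℝ) (x : E) : ‖gradient f x‖ = ‖fderiv ℝ f x‖ :=
  LinearIsometryEquiv.norm_map _ _

lemma isEnergyMinimizer_averageGap_of_gradient [MeasurableSpace E] {μ : Measure E} {w : E → ℝ}
    {V₁ V₂ : Set E} {I : (E → ℝ) → ℝ} {φ : E → ℝ}
    (hI : ∀ ψ, I ψ = 2⁻¹ * ∫ x, w x * ‖gradient ψ x‖ ^ 2 ∂μ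
      - (μ V₁).toReal⁻¹ * (∫ x in V₁, ψ x ∂μ) + (μ V₂).toReal⁻¹ * ∫ x in V₂, ψ x ∂μ)
    (hφ : Differentiable ℝ φ ∧ Integrable (fun x => w x * ‖gradient φ x‖ ^ 2) μ)
    (hmin : ∀ ψ, Differentiable ℝ ψ → Integrable (fun x => w x * ‖gradient ψ x‖ ^ 2) μ →
      I φ ≤ I ψ) :
    IsEnergyMinimizer μ w (averageGap μ V₁ V₂) φ := by
  have hI' : ∀ ψ, I ψ = 2⁻¹ * weightedEnergy μ w ψ - averageGap μ V₁ V₂ ψ := fun ψ => by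
    simp only [hI, norm_gradient_eq_norm_fderiv, weightedEnergy, averageGap, setAverage_eq,
      smul_eq_mul, Measure.real]
    ring
  simp only [norm_gradient_eq_norm_fderiv, hI'] at hφ hmin
  exact ⟨⟨hφ.1, hφ.2⟩, fun ψ hψ => hmin ψ hψ.differentiable hψ.integrable⟩

end Gradient

section Valleys

variable {d : ℕ} {ι : Type*} [Finite ι] {Φ : Euc d → ℝ} {H h : ℝ}

lemma exists_tendsto_zero_sqrt_integral_sub_setAverage_sq_le_of_isEnergyMinimizer
    (hΦ : Continuous Φ) (hmin : ∀ ξ, h ≤ Φ ξ) {U V : ι → Set (Euc d)}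
    (hUV : ∀ i, LieInCommonValley Φ H (U i) (V i)) (hVo : ∀ i, IsOpen (V i))
    (hVne : ∀ i, (V i).Nonempty) {i₁ i₂ : ι} (hdisj : Disjoint (V i₁) (V i₂))
    {φ : ℝ → Euc d → ℝ} (hφ : ∀ ε ∈ Ioo (0 : ℝ) 1,
      IsEnergyMinimizer volume (energyWeight Φ H h ε) (averageGap volume (V i₁) (V i₂)) (φ ε)) :
    ∃ err : ℝ → ℝ, Tendsto err (𝓝[>] 0) (𝓝 0) ∧ ∀ ε ∈ Ioo (0 : ℝ) 1, ∀ i,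
      √(∫ ξ in U i, (φ ε ξ - ⨍ ζ in V i, φ ε ζ) ^ 2) ≤
        err ε * √(averageGap volume (V i₁) (V i₂) (φ ε)) := by
  have hint : ∀ ε ∈ Ioo (0 : ℝ) 1, Integrable fun ξ => exp (-Φ ξ / ε) := fun ε hε =>
    (hφ ε hε).integrable_exp (hVo i₁) (hVne i₁) (hUV i₁).measure_right_ne_top hdisj
  choose err herr hbound using fun i =>
    (hUV i).exists_tendsto_zero_sqrt_integral_sub_setAverage_sq_le
      ((hVo i).measure_pos volume (hVne i)).ne' hΦ hmin hint
  cases nonempty_fintype ι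
  refine ⟨fun ε => ∑ i, |err i ε|, ?_, fun ε hε i => ?_⟩
  · simpa using tendsto_finsetSum Finset.univ fun i _ => (herr i).abs
  have henergy : weightedEnergy volume (energyWeight Φ H h ε) (φ ε) =
      averageGap volume (V i₁) (V i₂) (φ ε) :=
    (hφ ε hε).weightedEnergy_eq fun t => averageGap_smul _ _ _ t _
  calc √(∫ ξ in U i, (φ ε ξ - ⨍ ζ in V i, φ ε ζ) ^ 2)
      ≤ err i ε * √(averageGap volume (V i₁) (V i₂) (φ ε)) :=
        henergy ▸ hbound i ε hε (φ ε) (hφ ε hε).hasFiniteEnergy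
    _ ≤ (∑ j, |err j ε|) * √(averageGap volume (V i₁) (V i₂) (φ ε)) := by
        gcongr
        exact (le_abs_self _).trans
          (Finset.single_le_sum (fun j _ => abs_nonneg (err j ε)) (Finset.mem_univ i))

theorem L2_estimate_on_extended_valleys_general (hΦ : Continuous Φ)
    (hcoer : Tendsto Φ (cocompact (Euc d)) atTop) (hmin : ∀ ξ, h ≤ Φ ξ)
    {W : ι → Set (Euc d)} {m : ι → Euc d}
    (hW : ∀ i, W i = connectedComponentIn {ξ | Φ ξ < H} (m i))
    (hWdisj : Pairwise (Function.onFun Disjoint W)) {η η' : ℝ} (hη' : 0 < η') (hη'η : η' < η)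
    (hm : ∀ i, Φ (m i) < H - η) {U V : ι → Set (Euc d)}
    (hV : ∀ i, V i = {ξ | ξ ∈ W i ∧ Φ ξ < H - η})
    (hU : ∀ i, U i ⊆ {ξ | ξ ∈ W i ∧ Φ ξ ≤ H - η'}) {i₁ i₂ : ι} (hi : i₁ ≠ i₂)
    {φ : ℝ → Euc d → ℝ} (hφ : ∀ ε ∈ Ioo (0 : ℝ) 1,
      IsEnergyMinimizer volume (energyWeight Φ H h ε) (averageGap volume (V i₁) (V i₂)) (φ ε))
    {lamE : ℝ → ι → ℝ} (hlamE : ∀ ε i, lamE ε i = ⨍ ξ in V i, φ ε ξ)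
    (hnorm : ∀ ε ∈ Ioo (0 : ℝ) 1, lamE ε i₁ = -lamE ε i₂) :
    ∃ err : ℝ → ℝ, Tendsto err (𝓝[>] 0) (𝓝 0) ∧ ∀ ε ∈ Ioo (0 : ℝ) 1, ∀ i,
      √(∫ ξ in U i, (φ ε ξ - lamE ε i) ^ 2) ≤ err ε * √(lamE ε i₁) := by
  have hUV : ∀ i, LieInCommonValley Φ H (U i) (V i) := fun i => by
    refine lieInCommonValley_of_subset_connectedComponentIn hΦ hcoer (sub_lt_self H hη')
      (x := m i) (hW i ▸ hU i) ?_
    rw [hV, hW]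
    exact fun ξ hξ => ⟨hξ.1, hξ.2.le.trans (sub_le_sub_left hη'η.le H)⟩
  have hVo : ∀ i, IsOpen (V i) := fun i => by
    rw [hV, hW]
    exact (isOpen_lt hΦ continuous_const).connectedComponentIn.inter
      (isOpen_lt hΦ continuous_const)
  have hVne : ∀ i, (V i).Nonempty := fun i => by
    rw [hV, hW]
    exact ⟨m i, mem_connectedComponentIn ((hm i).trans (sub_lt_self H (hη'.trans hη'η))), hm i⟩
  have hdisj : Disjoint (V i₁) (V i₂) := by
    rw [hV, hV]
    exact (hWdisj hi).mono inter_subset_left inter_subset_left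
  obtain ⟨err, herr, hbound⟩ :=
    exists_tendsto_zero_sqrt_integral_sub_setAverage_sq_le_of_isEnergyMinimizer hΦ hmin hUV hVo
      hVne hdisj hφ
  refine ⟨fun ε => err ε * √2, by simpa using herr.mul_const √2, fun ε hε i => ?_⟩
  have hgap : averageGap volume (V i₁) (V i₂) (φ ε) = 2 * lamE ε i₁ := by
    rw [averageGap, ← hlamE, ← hlamE]
    linarith [hnorm ε hε]
  simpa only [hgap, sqrt_mul zero_le_two, ← mul_assoc, ← hlamE] using hbound ε hε i

end Valleys

/-- **L² estimate on extended valleys:** `‖φ^ε − λ_{ε,i}‖_{L²(Ṽ_i)} = o_ε(1) λ_ε^{1/2}`. -/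
theorem L2_estimate_on_extended_valleys
    (d K : ℕ) (hd : 1 ≤ d) (hK : 2 ≤ K)
    (Φ : Euc d → ℝ) (hΦ : ContDiff ℝ (⊤ : ℕ∞) Φ)
    (hcoer : Tendsto Φ (cocompact (Euc d)) atTop)
    (hfin : {ξ : Euc d | fderiv ℝ Φ ξ = 0}.Finite)
    (htight : ∀ a : ℝ, 0 ≤ a → ∃ C > 0, ∀ ε ∈ Set.Ioo (0:ℝ) 1,
      (∫ ξ in {ξ : Euc d | a ≤ Φ ξ}, Real.exp (-Φ ξ / ε)) ≤ C * Real.exp (-a / ε))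
    (H h : ℝ) (hhH : h < H)
    (W : Fin K → Set (Euc d)) (m : Fin K → Euc d)
    (hWc : ∀ i, W i = connectedComponentIn {ξ : Euc d | Φ ξ < H} (m i))
    (hWcover : {ξ : Euc d | Φ ξ < H} = ⋃ i, W i)
    (hWdisj : Pairwise (Function.onFun Disjoint W))
    (hUconn : IsConnected (⋃ i, closure (W i)))
    (hmmem : ∀ i, m i ∈ W i) (hmval : ∀ i, Φ (m i) = h)
    (hmmin : ∀ i, ∀ ξ ∈ W i, h ≤ Φ ξ)
    (hmnd : ∀ i, 0 < (hessian Φ (m i)).det)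
    (S : Finset (Euc d))
    (hS : ∀ σ ∈ S, Φ σ = H ∧ fderiv ℝ Φ σ = 0)
    (hSfull : ∀ ξ : Euc d, fderiv ℝ Φ ξ = 0 → Φ ξ = H → ξ ∈ S)
    (lam : Euc d → ℝ)
    (hlam : ∀ σ ∈ S, 0 < lam σ ∧
      Module.End.HasEigenvalue (Matrix.toLin' (hessian Φ σ)) (-lam σ) ∧
      (∀ r : ℝ, Module.End.HasEigenvalue (Matrix.toLin' (hessian Φ σ)) r → r = -lam σ ∨ 0 < r) ∧
      Module.finrank ℝ (Module.End.eigenspace (Matrix.toLin' (hessian Φ σ)) (-lam σ)) = 1)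
    (hdetS : ∀ σ ∈ S, (hessian Φ σ).det < 0)
    (η : ℝ) (hηpos : 0 < η) (hηlt : η < H - h)
    (hnoc : ∀ ξ : Euc d, fderiv ℝ Φ ξ = 0 → Φ ξ ∉ Set.Ioo (H - η) H)
    (V : Fin K → Set (Euc d)) (hV : ∀ i, V i = {ξ | ξ ∈ W i ∧ Φ ξ < H - η})
    (i1 i2 : Fin K) (hi1 : (i1 : ℕ) = 0) (hi2 : (i2 : ℕ) = 1)
    (Ifun : ℝ → (Euc d → ℝ) → ℝ)
    (hIfun : ∀ ε : ℝ, ∀ ψ : Euc d → ℝ, Ifun ε ψ =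
      2⁻¹ * (∫ ξ : Euc d, (sigma Φ ε ξ / tau H h ε) * ‖gradient ψ ξ‖^2)
        - (volume (V i1)).toReal⁻¹ * (∫ ξ in V i1, ψ ξ)
        + (volume (V i2)).toReal⁻¹ * (∫ ξ in V i2, ψ ξ))
    (φ : ℝ → Euc d → ℝ)
    (hφreg : ∀ ε ∈ Set.Ioo (0:ℝ) 1, Differentiable ℝ (φ ε) ∧
      Integrable (fun ξ => (sigma Φ ε ξ / tau H h ε) * ‖gradient (φ ε) ξ‖^2))
    (hφmin : ∀ ε ∈ Set.Ioo (0:ℝ) 1, ∀ ψ : Euc d → ℝ, Differentiable ℝ ψ →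
      Integrable (fun ξ => (sigma Φ ε ξ / tau H h ε) * ‖gradient ψ ξ‖^2) →
      Ifun ε (φ ε) ≤ Ifun ε ψ)
    (lamE : ℝ → Fin K → ℝ)
    (hlamE : ∀ ε i, lamE ε i = (volume (V i)).toReal⁻¹ * ∫ ξ in V i, φ ε ξ)
    (hnorm : ∀ ε ∈ Set.Ioo (0:ℝ) 1, lamE ε i1 = -(lamE ε i2) ∧ 0 ≤ lamE ε i1)
    (η' : ℝ) (hη'pos : 0 < η') (hη'lt : η' < η)
    (Vt : Fin K → Set (Euc d))
    (hVt : ∀ i, Vt i = connectedComponentIn {ξ | ξ ∈ W i ∧ Φ ξ < H - η'} (m i)) :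
    ∃ err : ℝ → ℝ, Tendsto err (𝓝[>] (0:ℝ)) (𝓝 0) ∧
      ∀ ε ∈ Set.Ioo (0:ℝ) 1, ∀ i,
        Real.sqrt (∫ ξ in Vt i, (φ ε ξ - lamE ε i)^2) ≤ err ε * Real.sqrt (lamE ε i1) := by
  have hmin : ∀ ξ, h ≤ Φ ξ := fun ξ => by
    rcases lt_or_ge (Φ ξ) H with hlt | hge
    · obtain ⟨i, hi⟩ := mem_iUnion.1 (hWcover.subset hlt)
      exact hmmin i ξ hi
    · exact hhH.le.trans hge
  exact L2_estimate_on_extended_valleys_general hΦ.continuous hcoer hmin hWc hWdisj hη'pos hη'lt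
    (fun i => by linarith [hmval i]) hV
    (fun i => (hVt i).subset.trans ((connectedComponentIn_subset _ _).trans
      fun ξ hξ => ⟨hξ.1, hξ.2.le⟩))
    (fun heq => by simp [heq, hi2] at hi1)
    (fun ε hε => isEnergyMinimizer_averageGap_of_gradient (hIfun ε) (hφreg ε hε) (hφmin ε hε))
    (fun ε i => by rw [hlamE, setAverage_eq, smul_eq_mul, Measure.real])
    (fun ε hε => (hnorm ε hε).1)
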